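/- Let n, m ≥ 1 be integers and let Ω = Ω₀×Ω₂ ⊂ 𝕋^n×𝕋^m with Ω₀ ⊂ 𝕋^n and Ω₂ ⊂ 𝕋^m nonempty and open. There exists a constant C > 0, independent of α and λ, such that for every α ∈ [0,1)^n, every λ ∈ ℝ, and all u, f ∈ L²(𝕋^n×𝕋^m) with u in the domain of H_α and (H_α − λ)u = f: ‖u‖_{L²(𝕋^n×𝕋^m)} ≤ C(‖f‖_{L²(𝕋^n×𝕋^m)} + ‖u‖_{L²(Ω)}). -/

import Mathlib

open MeasureTheory Complex Filter ENNReal NNReal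

noncomputable section

instance fact_two_pi_pos : Fact (0 < 2 * Real.pi) := ⟨by positivity⟩

/-- The waveguide manifold `ℝ^n × 𝕋^m`, where `𝕋 = ℝ/2πℤ`. -/
abbrev Wave (n m : ℕ) : Type :=
  EuclideanSpace ℝ (Fin n) × (Fin m → AddCircle (2 * Real.pi))

/-- The frequency space `ℝ^n × ℤ^m`. -/
abbrev Freq (n m : ℕ) : Type := EuclideanSpace ℝ (Fin n) × (Fin m → ℤ)

/-- The measure on frequency space: Lebesgue × counting. -/
noncomputable def freqMeasure (n m : ℕ) : Measure (Freq n m) :=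
  (volume : Measure (EuclideanSpace ℝ (Fin n))).prod Measure.count

/-- `|ξ|²` for a frequency `ξ ∈ ℝ^n × ℤ^m`. -/
def freqNormSq {n m : ℕ} (ξ : Freq n m) : ℝ :=
  ‖ξ.1‖ ^ 2 + ∑ i, ((ξ.2 i : ℝ)) ^ 2

/-- The character `e^{i z·ξ}` on `ℝ^n × 𝕋^m`. -/
noncomputable def waveChar {n m : ℕ} (ξ : Freq n m) (z : Wave n m) : ℂ :=
  Complex.exp (Complex.I * ((inner ℝ z.1 ξ.1 : ℝ) : ℂ)) * ∏ i, fourier (ξ.2 i) (z.2 i)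

/-- The Fourier transform on `ℝ^n × 𝕋^m`, with frequencies `ξ ∈ ℝ^n × ℤ^m`. -/
noncomputable def waveFT {n m : ℕ} (f : Wave n m → ℂ) (ξ : Freq n m) : ℂ :=
  ∫ z : Wave n m, f z * (starRingEnd ℂ) (waveChar ξ z)

/-- Squared `L²` norm of `f` over a set `A`. -/
noncomputable def L2sq {X : Type*} [MeasureSpace X] (A : Set X) (f : X → ℂ) : ℝ≥0∞ :=
  ∫⁻ z in A, (‖f z‖₊ : ℝ≥0∞) ^ 2

/-- Squared Sobolev `H^s` norm, `‖⟨ξ⟩^s F f‖_{L²}²`. -/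
noncomputable def sobSq {n m : ℕ} (s : ℝ) (f : Wave n m → ℂ) : ℝ≥0∞ :=
  ∫⁻ ξ, ENNReal.ofReal ((1 + freqNormSq ξ) ^ s) * (‖waveFT f ξ‖₊ : ℝ≥0∞) ^ 2
    ∂(freqMeasure n m)

/-- Membership in `H^s(ℝ^n × 𝕋^m)`. -/
def MemHs {n m : ℕ} (s : ℝ) (f : Wave n m → ℂ) : Prop :=
  MemLp f 2 (volume : Measure (Wave n m)) ∧ sobSq s f < ⊤

/-- Condition (G): `Ω₁ ⊂ ℝ^n` is nonempty, open and `2πℤ^n`-invariant; `Ω₂ ⊂ 𝕋^m` is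
nonempty and open. -/
structure CondG (n m : ℕ) (Ω₁ : Set (EuclideanSpace ℝ (Fin n)))
    (Ω₂ : Set (Fin m → AddCircle (2 * Real.pi))) : Prop where
  nonempty₁ : Ω₁.Nonempty
  open₁ : IsOpen Ω₁
  invariant₁ : ∀ (k : Fin n → ℤ) (x : EuclideanSpace ℝ (Fin n)), x ∈ Ω₁ →
    x + (WithLp.equiv 2 (Fin n → ℝ)).symm (fun i => 2 * Real.pi * (k i : ℝ)) ∈ Ω₁
  nonempty₂ : Ω₂.Nonempty
  open₂ : IsOpen Ω₂

/-- `U` is the Schrödinger group `e^{itΔ}` on `ℝ^n × 𝕋^m`: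
`F (U t f)(ξ) = e^{-it|ξ|²} (F f)(ξ)`. -/
def IsSchrodingerGroup {n m : ℕ} (U : ℝ → (Wave n m → ℂ) → (Wave n m → ℂ)) : Prop :=
  ∀ (t : ℝ) (f : Wave n m → ℂ) (ξ : Freq n m),
    waveFT (U t f) ξ = Complex.exp (-(Complex.I * (t : ℂ) * (freqNormSq ξ : ℂ))) * waveFT f ξ

/-- `J` is the operator `(1-Δ)^{-s}`, i.e. the Fourier multiplier `⟨ξ⟩^{-2s}`. -/
def IsBesselOp {n m : ℕ} (s : ℝ) (J : (Wave n m → ℂ) → (Wave n m → ℂ)) : Prop :=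
  ∀ (f : Wave n m → ℂ) (ξ : Freq n m),
    waveFT (J f) ξ = Complex.ofReal ((1 + freqNormSq ξ) ^ (-s)) * waveFT f ξ

/-- Continuity of `t ↦ f t` from `I` into `H^s(ℝ^n × 𝕋^m)`. -/
def ContHs {n m : ℕ} (s : ℝ) (I : Set ℝ) (f : ℝ → Wave n m → ℂ) : Prop :=
  ∀ t₀ ∈ I, Filter.Tendsto (fun t => sobSq s (fun z => f t z - f t₀ z))
    (nhdsWithin t₀ I) (nhds 0)

/-- Space-time Fourier transform of `u : ℝ_t × (ℝ^n × 𝕋^m) → ℂ`. -/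
noncomputable def stFT {n m : ℕ} (u : ℝ → Wave n m → ℂ) (ξ : Freq n m) (τ : ℝ) : ℂ :=
  ∫ t : ℝ, Complex.exp (-(Complex.I * (τ : ℂ) * (t : ℂ))) * waveFT (u t) ξ

/-- Squared Bourgain norm `‖u‖_{X^{s,b}}² = ‖⟨τ-|ξ|²⟩^b ⟨ξ⟩^s ũ‖_{L²}²`. -/
noncomputable def XNormSq {n m : ℕ} (s b : ℝ) (u : ℝ → Wave n m → ℂ) : ℝ≥0∞ :=
  ∫⁻ p : Freq n m × ℝ,
    ENNReal.ofReal ((1 + (p.2 - freqNormSq p.1) ^ 2) ^ b * (1 + freqNormSq p.1) ^ s)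
      * (‖stFT u p.1 p.2‖₊ : ℝ≥0∞) ^ 2 ∂((freqMeasure n m).prod volume)

/-- Bourgain norm `‖u‖_{X^{s,b}}`. -/
noncomputable def XNorm {n m : ℕ} (s b : ℝ) (u : ℝ → Wave n m → ℂ) : ℝ≥0∞ :=
  XNormSq s b u ^ (1/2 : ℝ)

/-- Restriction Bourgain norm `‖u‖_{X^{s,b}_I}`, an infimum over all extensions. -/
noncomputable def XNormOn {n m : ℕ} (s b : ℝ) (I : Set ℝ) (u : ℝ → Wave n m → ℂ) : ℝ≥0∞ :=
  ⨅ v : {v : ℝ → Wave n m → ℂ // ∀ t ∈ I, v t = u t}, XNorm s b v.1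

/-- The torus `𝕋^n = (ℝ/2πℤ)^n`. -/
abbrev Torus (n : ℕ) : Type := Fin n → AddCircle (2 * Real.pi)

/-- Fourier coefficients on `𝕋^n × 𝕋^m`. -/
noncomputable def torFT {n m : ℕ} (u : Torus n × Torus m → ℂ)
    (k : Fin n → ℤ) (l : Fin m → ℤ) : ℂ :=
  ∫ z : Torus n × Torus m,
    u z * (starRingEnd ℂ) ((∏ i, fourier (k i) (z.1 i)) * ∏ j, fourier (l j) (z.2 j))

/-- The symbol `|k-α|² + |l|²` of the partially twisted Laplacian `-H_α`. -/
def twSymb {n m : ℕ} (α : Fin n → ℝ) (k : Fin n → ℤ) (l : Fin m → ℤ) : ℝ :=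
  (∑ i, ((k i : ℝ) - α i) ^ 2) + ∑ j, ((l j : ℝ)) ^ 2

/-- `U` is the unitary group `e^{itH_α}` generated by the partially twisted Laplacian:
it multiplies the `(k,l)` Fourier coefficient by `e^{-it(|k-α|²+|l|²)}`. -/
def IsTwistedGroup {n m : ℕ} (α : Fin n → ℝ)
    (U : ℝ → (Torus n × Torus m → ℂ) → (Torus n × Torus m → ℂ)) : Prop :=
  ∀ (t : ℝ) (u : Torus n × Torus m → ℂ) (k : Fin n → ℤ) (l : Fin m → ℤ),
    torFT (U t u) k l = Complex.exp (-(Complex.I * (t : ℂ) * (twSymb α k l : ℂ))) * torFT u k l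

/-- The unit cube `[0,1)^n`. -/
def cube01 (n : ℕ) : Set (Fin n → ℝ) := Set.univ.pi fun _ => Set.Ico (0 : ℝ) 1

/-- The fundamental cube `[0,2π)^n` of the torus. -/
def torCube (n : ℕ) : Set (Fin n → ℝ) := Set.univ.pi fun _ => Set.Ico (0 : ℝ) (2 * Real.pi)

/-- The partial Floquet–Bloch transform
`(Π_α g)(x,y) = e^{ix·α} Σ_{k ∈ ℤ^n} e^{2πiα·k} g(x + 2kπ, y)`,
written on representatives `x ∈ ℝ^n`. -/
noncomputable def floq {n m : ℕ} (α : Fin n → ℝ) (g : Wave n m → ℂ)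
    (x : Fin n → ℝ) (y : Fin m → AddCircle (2 * Real.pi)) : ℂ :=
  Complex.exp (Complex.I * ((∑ i, x i * α i : ℝ) : ℂ)) *
    ∑' k : Fin n → ℤ,
      Complex.exp (2 * Real.pi * Complex.I * ((∑ i, α i * (k i : ℝ) : ℝ) : ℂ)) *
        g ((WithLp.equiv 2 (Fin n → ℝ)).symm (fun i => x i + 2 * (k i : ℝ) * Real.pi), y)

end
section Comb

set_option linter.unusedSectionVars false

open Module

variable {K : Type*} [AddCommGroup K] [DecidableEq K] {V : Type*} [NormedAddCommGroup V]
  [InnerProductSpace ℝ V] [FiniteDimensional ℝ V]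

/-- connected finite sets with steps in `B` -/
inductive BConn (B : Finset K) : Finset K → Prop
  | single (p : K) : BConn B {p}
  | insert (T : Finset K) (q t : K) (hT : BConn B T) (ht : t ∈ T)
      (hq : q - t ∈ B ∨ t - q ∈ B) : BConn B (insert q T)

/-- affine dimension -/
noncomputable def adim (φ : K →+ V) (T : Finset K) : ℕ := finrank ℝ (vectorSpan ℝ (φ '' (T : Set K)))

/-- being in the annulus -/
def InAnn (φ : K →+ V) (c : V) (μ : ℝ) (T : Finset K) : Prop :=
  ∀ k ∈ T, |‖φ k - c‖ ^ 2 - μ| ≤ 1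

lemma span_bound (A : Finset K) (φ : K →+ V) :
    ∃ L : ℝ, 0 ≤ L ∧ ∀ x ∈ Submodule.span ℝ (φ '' (A : Set K)), ∀ (c : V) (M : ℝ), 0 ≤ M →
      (∀ h ∈ A, |inner ℝ (φ h) c| ≤ M) → |inner ℝ x c| ≤ L * ‖x‖ * M := by
  classical
  let W := Submodule.span ℝ (φ '' (A : Set K))
  let v : A → W := fun a => ⟨φ a, Submodule.subset_span ⟨a, a.2, rfl⟩⟩
  let F : (A → ℝ) →ₗ[ℝ] W := Fintype.linearCombination ℝ v
  have hF : LinearMap.range F = ⊤ := by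
    rw [Fintype.range_linearCombination]
    have := Submodule.span_span_coe_preimage (R := ℝ) (s := φ '' (A : Set K))
    convert this using 2
    ext y
    constructor
    · rintro ⟨a, rfl⟩
      exact ⟨a, a.2, rfl⟩
    · rintro ⟨a, ha, h⟩
      exact ⟨⟨a, ha⟩, Subtype.ext h⟩
  obtain ⟨g, hg⟩ := F.exists_rightInverse_of_surjective hF
  let g' := LinearMap.toContinuousLinearMap g
  refine ⟨A.card * ‖g'‖, by positivity, ?_⟩
  intro x hx c M hM hA
  have h1 : x = ∑ a : A, (g ⟨x, hx⟩ a) • φ a := by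
    have := congrArg Subtype.val (LinearMap.congr_fun hg ⟨x, hx⟩)
    simp [F, Fintype.linearCombination_apply, v] at this
    exact this.symm
  have h2 : ∀ a, |g ⟨x, hx⟩ a| ≤ ‖g'‖ * ‖x‖ := by
    intro a
    have := g'.le_opNorm ⟨x, hx⟩
    exact (norm_le_pi_norm (g ⟨x, hx⟩) a).trans this
  have h3 : inner ℝ x c = ∑ a : A, (g ⟨x, hx⟩ a) * inner ℝ (φ a) c := by
    conv_lhs => rw [h1]
    simp [sum_inner, inner_smul_left]
  rw [h3]
  calc |∑ a : A, (g ⟨x, hx⟩ a) * inner ℝ (φ a) c|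
      ≤ ∑ a : A, |(g ⟨x, hx⟩ a) * inner ℝ (φ a) c| := Finset.abs_sum_le_sum_abs _ _
    _ ≤ ∑ a : A, (‖g'‖ * ‖x‖) * M := by
        refine Finset.sum_le_sum fun a _ => ?_
        rw [abs_mul]
        exact mul_le_mul (h2 a) (hA a a.2) (abs_nonneg _) (by positivity)
    _ = _ := by simp; ring

lemma key_lemma (φ : K →+ V) (hfin : ∀ L : ℝ, {k | ‖φ k‖ ≤ L}.Finite) (A : Finset K) :
    ∃ F : Finset K, ∀ (c : V) (μ : ℝ) (T S : Finset K), InAnn φ c μ S → T ⊆ S →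
      (∀ p ∈ T, ∀ q ∈ T, p - q ∈ A) →
      vectorSpan ℝ (φ '' (S : Set K)) ≤ vectorSpan ℝ (φ '' (T : Set K)) →
      ∀ p₀ ∈ T, ∀ p ∈ S, p - p₀ ∈ F := by
  classical
  choose L hL0 hL using fun A0 : Finset K => span_bound A0 φ
  let LL := ∑ A0 ∈ A.powerset, L A0
  let M := 1 + ∑ h ∈ A, ‖φ h‖ ^ 2
  have hM : 0 ≤ M := by positivity
  have hLL : 0 ≤ LL := Finset.sum_nonneg fun _ _ => hL0 _
  refine ⟨(hfin (2 * LL * M + 2)).toFinset, ?_⟩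
  intro c μ T S hS hTS hTA hsp p₀ hp₀ p hp
  let A0 := T.image (fun t => t - p₀)
  have hA0 : A0 ⊆ A := by
    intro x hx
    obtain ⟨t, ht, rfl⟩ := Finset.mem_image.1 hx
    exact hTA t ht p₀ hp₀
  have hx : φ (p - p₀) ∈ Submodule.span ℝ (φ '' (A0 : Set K)) := by
    have h1 : φ p -ᵥ φ p₀ ∈ vectorSpan ℝ (φ '' (S : Set K)) :=
      vsub_mem_vectorSpan ℝ ⟨p, hp, rfl⟩ ⟨p₀, hTS hp₀, rfl⟩
    have h2 := hsp h1
    rw [vectorSpan_eq_span_vsub_set_right ℝ (p := φ p₀) (Set.mem_image_of_mem φ hp₀)] at h2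
    rw [map_sub]
    refine Submodule.span_mono ?_ h2
    rintro _ ⟨_, ⟨t, ht, rfl⟩, rfl⟩
    exact ⟨t - p₀, by simp only [A0, Finset.coe_image]; exact ⟨t, ht, rfl⟩, by simp⟩
  have hexp : ∀ q ∈ S, |‖φ (q - p₀)‖ ^ 2 + 2 * inner ℝ (φ (q - p₀)) (φ p₀ - c)| ≤ 2 := by
    intro q hq
    have h1 := hS q hq
    have h2 := hS p₀ (hTS hp₀)
    have h3 : φ q - c = φ (q - p₀) + (φ p₀ - c) := by simp
    rw [h3, norm_add_sq_real] at h1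
    rw [abs_le] at *
    constructor <;> linarith [h1.1, h1.2, h2.1, h2.2]
  have hin := hL A0 _ hx (φ p₀ - c) M hM (by
    intro h hh
    obtain ⟨t, ht, rfl⟩ := Finset.mem_image.1 hh
    have h1 := hexp t (hTS ht)
    have h2 : ‖φ (t - p₀)‖ ^ 2 ≤ ∑ h ∈ A, ‖φ h‖ ^ 2 :=
      Finset.single_le_sum (f := fun h => ‖φ h‖ ^ 2) (fun _ _ => by positivity) (hA0 hh)
    have h3 : 0 ≤ ‖φ (t - p₀)‖ ^ 2 := by positivity
    simp only [M]
    rw [abs_le] at *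
    constructor <;> linarith [h1.1, h1.2])
  have h4 : L A0 ≤ LL :=
    Finset.single_le_sum (f := L) (fun _ _ => hL0 _) (Finset.mem_powerset.2 hA0)
  have h5 := hexp p hp
  have h6 : |inner ℝ (φ (p - p₀)) (φ p₀ - c)| ≤ LL * ‖φ (p - p₀)‖ * M :=
    hin.trans (by gcongr)
  simp only [Set.Finite.mem_toFinset, Set.mem_ofPred_eq]
  set x := ‖φ (p - p₀)‖ with hxdef
  have hx0 : 0 ≤ x := norm_nonneg _
  by_contra hcon
  push Not at hcon
  rw [abs_le] at h5 h6
  have h7 : x ^ 2 ≤ 2 + 2 * (LL * x * M) := by linarith [h5.2, h6.1]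
  have h8 : 0 ≤ LL * M := by positivity
  nlinarith

lemma vectorSpan_mono' (φ : K →+ V) {T S : Finset K} (h : T ⊆ S) :
    vectorSpan ℝ (φ '' (T : Set K)) ≤ vectorSpan ℝ (φ '' (S : Set K)) :=
  vectorSpan_mono ℝ (Set.image_mono (by exact_mod_cast h))

lemma span_le_of_adim (φ : K →+ V) {T S : Finset K} (h : T ⊆ S) (h' : adim φ S ≤ adim φ T) :
    vectorSpan ℝ (φ '' (S : Set K)) ≤ vectorSpan ℝ (φ '' (T : Set K)) :=
  (Submodule.eq_of_le_of_finrank_le (vectorSpan_mono' φ h) h').ge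

lemma BConn.nonempty {B T : Finset K} (h : BConn B T) : T.Nonempty := by
  cases h <;> simp

lemma conn_bdd (φ : K →+ V) (hfin : ∀ L : ℝ, {k | ‖φ k‖ ≤ L}.Finite) (B : Finset K) (j : ℕ) :
    ∃ A : Finset K, ∀ (c : V) (μ : ℝ) (T : Finset K), BConn B T → InAnn φ c μ T →
      adim φ T ≤ j → ∀ p ∈ T, ∀ q ∈ T, p - q ∈ A := by
  classical
  induction j with
  | zero =>
    refine ⟨(hfin 0).toFinset, ?_⟩
    intro c μ T _ _ hd p hp q hq
    have h0 : vectorSpan ℝ (φ '' (T : Set K)) = ⊥ :=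
      Submodule.finrank_eq_zero.1 (Nat.le_zero.1 hd)
    have h1 : φ p -ᵥ φ q ∈ vectorSpan ℝ (φ '' (T : Set K)) :=
      vsub_mem_vectorSpan ℝ ⟨p, hp, rfl⟩ ⟨q, hq, rfl⟩
    rw [h0, Submodule.mem_bot] at h1
    simp only [Set.Finite.mem_toFinset, Set.mem_ofPred_eq, map_sub]
    simp only [vsub_eq_sub] at h1
    rw [h1, norm_zero]
  | succ j ih =>
    obtain ⟨A, hA⟩ := ih
    -- difference set after one more step
    let B' := B ∪ B.image (fun b => -b)
    let A1 := (B' ×ˢ A).image (fun x => x.1 + x.2)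
    let A' := A ∪ A1 ∪ A1.image (fun b => -b) ∪ {0}
    obtain ⟨F, hF⟩ := key_lemma φ hfin A'
    refine ⟨A ∪ (F ×ˢ F).image (fun x => x.1 - x.2), ?_⟩
    intro c μ T hT hann hd p hp q hq
    have main : ∀ T : Finset K, BConn B T → InAnn φ c μ T → adim φ T ≤ j ∨
        ∃ T' ⊆ T, T'.Nonempty ∧ j + 1 ≤ adim φ T' ∧ ∀ p ∈ T', ∀ q ∈ T', p - q ∈ A' := by
      intro T hT
      induction hT with
      | single p =>
        intro _
        left
        have h0 : vectorSpan ℝ (φ '' (({p} : Finset K) : Set K)) = ⊥ := by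
          rw [Finset.coe_singleton, Set.image_singleton, vectorSpan_singleton]
        rw [adim, h0, finrank_bot]
        exact Nat.zero_le _
      | insert T q t hT ht hq ih =>
        intro hann
        have hannT : InAnn φ c μ T := fun k hk => hann k (Finset.mem_insert_of_mem hk)
        rcases ih hannT with h | ⟨T', h1, h2, h3, h4⟩
        · by_cases hd : adim φ (insert q T) ≤ j
          · exact Or.inl hd
          · right
            refine ⟨_, subset_rfl, by simp, by omega, ?_⟩
            have hdiff := hA c μ T hT hannT h
            have hqt : q - t ∈ B' := by
              simp only [B', Finset.mem_union, Finset.mem_image]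
              rcases hq with h | h
              · exact Or.inl h
              · exact Or.inr ⟨_, h, by abel⟩
            have hqx : ∀ x ∈ T, q - x ∈ A1 := by
              intro x hx
              simp only [A1, Finset.mem_image, Finset.mem_product]
              exact ⟨(q - t, t - x), ⟨hqt, hdiff t ht x hx⟩, by simp⟩
            intro a ha b hb
            simp only [A', Finset.mem_union, Finset.mem_image, Finset.mem_singleton]
            rcases Finset.mem_insert.1 ha with rfl | ha' <;>
            rcases Finset.mem_insert.1 hb with rfl | hb'
            · right; simp
            · exact Or.inl (Or.inl (Or.inr (hqx b hb')))
            · exact Or.inl (Or.inr ⟨_, hqx a ha', by abel⟩)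
            · exact Or.inl (Or.inl (Or.inl (hdiff a ha' b hb')))
        · exact Or.inr ⟨T', h1.trans (Finset.subset_insert _ _), h2, h3, h4⟩
    rw [Finset.mem_union]
    rcases main T hT hann with h | ⟨T', h1, ⟨p₀, hp₀⟩, h3, h4⟩
    · exact Or.inl (hA c μ T hT hann h p hp q hq)
    · right
      have := hF c μ T' T hann h1 h4 (span_le_of_adim φ h1 (hd.trans h3)) p₀ hp₀
      rw [Finset.mem_image]
      exact ⟨(p - p₀, q - p₀), by simp [this p hp, this q hq], by simp⟩

/-- Either all connected subsets have smaller dimension, or the set is bounded. -/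
lemma dichotomy (φ : K →+ V) (hfin : ∀ L : ℝ, {k | ‖φ k‖ ≤ L}.Finite) (B : Finset K) (j : ℕ) :
    ∃ F : Finset K, ∀ (c : V) (μ : ℝ) (S : Finset K), InAnn φ c μ S → adim φ S ≤ j + 1 →
      (∀ T ⊆ S, BConn B T → adim φ T ≤ j) ∨ ∃ p₀, ∀ p ∈ S, p - p₀ ∈ F := by
  obtain ⟨A, hA⟩ := conn_bdd φ hfin B (j + 1)
  obtain ⟨F, hF⟩ := key_lemma φ hfin A
  refine ⟨F, fun c μ S hS hd => ?_⟩
  by_cases h : ∀ T ⊆ S, BConn B T → adim φ T ≤ j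
  · exact Or.inl h
  · push Not at h
    obtain ⟨T, hTS, hT, hdT⟩ := h
    obtain ⟨p₀, hp₀⟩ := hT.nonempty
    have hannT : InAnn φ c μ T := fun k hk => hS k (hTS hk)
    have hdT' : adim φ T ≤ j + 1 := le_trans (Submodule.finrank_mono (vectorSpan_mono' φ hTS)) hd
    exact Or.inr ⟨p₀, hF c μ T S hS hTS (hA c μ T hT hannT hdT')
      (span_le_of_adim φ hTS (by omega)) p₀ hp₀⟩

/-- splitting off a component -/
lemma exists_component (B : Finset K) (S : Finset K) (p : K) (hp : p ∈ S) :
    ∃ T ⊆ S, BConn B T ∧ ∀ t ∈ T, ∀ q ∈ S \ T, q - t ∉ B ∧ t - q ∉ B := by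
  classical
  obtain ⟨T, hT, hmax⟩ := Finset.exists_max_image (S.powerset.filter (BConn B)) Finset.card
    ⟨{p}, by simp [hp, BConn.single]⟩
  simp only [Finset.mem_filter, Finset.mem_powerset] at hT hmax
  refine ⟨T, hT.1, hT.2, ?_⟩
  intro t ht q hq
  rw [Finset.mem_sdiff] at hq
  by_contra hcon
  have : q - t ∈ B ∨ t - q ∈ B := by tauto
  have h1 := hmax (insert q T) ⟨Finset.insert_subset hq.1 hT.1, .insert T q t hT.2 ht this⟩
  rw [Finset.card_insert_of_notMem hq.2] at h1
  omega

end Comb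
section Harm

set_option linter.unusedSectionVars false

open scoped ComplexConjugate Topology

variable {K : Type*} [AddCommGroup K] [DecidableEq K]
  {G : Type*} [AddCommGroup G] [TopologicalSpace G] [IsTopologicalAddGroup G] [CompactSpace G]
  [MeasurableSpace G] [BorelSpace G]

/-- A system of characters. -/
structure CharSys (e : K → C(G, ℂ)) : Prop where
  add : ∀ a b x, e (a + b) x = e a x * e b x
  map : ∀ k x y, e k (x + y) = e k x * e k y
  conj_eq : ∀ k x, conj (e k x) = e (-k) x
  zero : ∀ x, e 0 x = 1
  loc : ∀ k, k ≠ 0 → ∀ U ∈ 𝓝 (0 : G), ∃ s ∈ U, e k s ≠ 1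
  dense : ∀ f : C(G, ℂ), ∀ δ > 0, ∃ (B : Finset K) (p : K → ℂ),
    ∀ x, ‖f x - ∑ b ∈ B, p b * e b x‖ ≤ δ

/-- trigonometric polynomial -/
noncomputable def tp (e : K → C(G, ℂ)) (a : K → ℂ) (S : Finset K) (x : G) : ℂ :=
  ∑ k ∈ S, a k * e k x

variable {e : K → C(G, ℂ)} (he : CharSys e)

lemma tp_cont (e : K → C(G, ℂ)) (a : K → ℂ) (S : Finset K) : Continuous (tp e a S) := by
  unfold tp; fun_prop

include he

lemma CharSys.norm (k : K) (x : G) : ‖e k x‖ = 1 := by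
  have h : e k x * conj (e k x) = 1 := by
    rw [he.conj_eq, ← he.add]; simp [he.zero]
  rw [Complex.mul_conj, Complex.normSq_eq_norm_sq] at h
  have h2 : ‖e k x‖ ^ 2 = 1 := by exact_mod_cast h
  have h3 := norm_nonneg (e k x)
  nlinarith

lemma CharSys.ne_zero (k : K) (x : G) : e k x ≠ 0 := by
  intro h
  have := he.norm k x
  simp [h] at this

lemma cont_int (ν : Measure G) [IsFiniteMeasure ν] {f : G → ℂ} (hf : Continuous f) :
    Integrable f ν := by
  exact hf.integrable_of_hasCompactSupport (HasCompactSupport.of_compactSpace _)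

lemma cont_int_real (ν : Measure G) [IsFiniteMeasure ν] {f : G → ℝ} (hf : Continuous f) :
    Integrable f ν := by
  exact hf.integrable_of_hasCompactSupport (HasCompactSupport.of_compactSpace _)

lemma CharSys.int_ne (ν : Measure G) [IsFiniteMeasure ν] [ν.IsAddLeftInvariant] {k : K}
    (hk : k ≠ 0) : ∫ x, e k x ∂ν = 0 := by
  obtain ⟨s, -, hs⟩ := he.loc k hk Set.univ Filter.univ_mem
  have h1 : ∫ x, e k (s + x) ∂ν = ∫ x, e k x ∂ν := integral_add_left_eq_self _ s
  simp_rw [he.map, integral_const_mul] at h1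
  have h2 : (e k s - 1) * ∫ x, e k x ∂ν = 0 := by rw [sub_mul, h1]; ring
  exact (mul_eq_zero.1 h2).resolve_left (sub_ne_zero.2 hs)

lemma CharSys.int_zero (ν : Measure G) [IsFiniteMeasure ν] :
    ∫ x, e 0 x ∂ν = (ν.real Set.univ : ℂ) := by
  simp [he.zero]

lemma expand (p a a' : K → ℂ) (B T T' : Finset K) (x : G) :
    tp e p B x * tp e a T x * conj (tp e a' T' x) =
      ∑ b ∈ B, ∑ t ∈ T, ∑ q ∈ T', p b * a t * conj (a' q) * e (b + t - q) x := by
  simp only [tp, map_sum, map_mul, he.conj_eq]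
  rw [Finset.sum_mul_sum]
  rw [Finset.sum_mul]
  refine Finset.sum_congr rfl fun b _ => ?_
  rw [Finset.sum_mul_sum]
  refine Finset.sum_congr rfl fun t _ => ?_
  refine Finset.sum_congr rfl fun q _ => ?_
  rw [sub_eq_add_neg, he.add, he.add]
  ring

lemma int_expand (ν : Measure G) [IsFiniteMeasure ν] (p a a' : K → ℂ) (B T T' : Finset K) :
    ∫ x, tp e p B x * tp e a T x * conj (tp e a' T' x) ∂ν =
      ∑ b ∈ B, ∑ t ∈ T, ∑ q ∈ T', p b * a t * conj (a' q) * ∫ x, e (b + t - q) x ∂ν := by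
  have hi : ∀ (z : ℂ) k, Integrable (fun x => z * e k x) ν := fun z k =>
    cont_int he ν (by fun_prop)
  simp_rw [expand he]
  rw [integral_finsetSum _ fun b _ => integrable_finsetSum _ fun t _ =>
    integrable_finsetSum _ fun q _ => hi _ _]
  refine Finset.sum_congr rfl fun b _ => ?_
  rw [integral_finsetSum _ fun t _ => integrable_finsetSum _ fun q _ => hi _ _]
  refine Finset.sum_congr rfl fun t _ => ?_
  rw [integral_finsetSum _ fun q _ => hi _ _]
  refine Finset.sum_congr rfl fun q _ => ?_
  rw [integral_const_mul]

lemma cross_zero (ν : Measure G) [IsFiniteMeasure ν] [ν.IsAddLeftInvariant]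
    (p a a' : K → ℂ) (B T T' : Finset K) (h : ∀ t ∈ T, ∀ q ∈ T', q - t ∉ B) :
    ∫ x, tp e p B x * tp e a T x * conj (tp e a' T' x) ∂ν = 0 := by
  rw [int_expand he]
  refine Finset.sum_eq_zero fun b hb => Finset.sum_eq_zero fun t ht =>
    Finset.sum_eq_zero fun q hq => ?_
  rw [he.int_ne ν, mul_zero]
  intro h0
  apply h t ht q hq
  have : q - t = b := by rw [sub_eq_zero] at h0; rw [← h0]; abel
  rwa [this]

lemma int_normSq (ν : Measure G) [IsFiniteMeasure ν] [ν.IsAddLeftInvariant]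
    (a : K → ℂ) (S : Finset K) :
    ∫ x, ‖tp e a S x‖ ^ 2 ∂ν = ν.real Set.univ * ∑ k ∈ S, ‖a k‖ ^ 2 := by
  have h1 := int_expand he ν (fun _ => 1) a a {0} S S
  have h2 : ∀ x, tp e (fun _ => 1) {0} x * tp e a S x * conj (tp e a S x)
      = ((‖tp e a S x‖ ^ 2 : ℝ) : ℂ) := by
    intro x
    have : tp e (fun _ => 1) {0} x = 1 := by simp [tp, he.zero]
    rw [this, one_mul, Complex.mul_conj, Complex.normSq_eq_norm_sq]
  simp_rw [h2] at h1
  rw [integral_complex_ofReal] at h1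
  have h3 : ∀ t ∈ S, ∑ q ∈ S, (1 : ℂ) * a t * conj (a q) * ∫ x, e (0 + t - q) x ∂ν
      = ((ν.real Set.univ * ‖a t‖ ^ 2 : ℝ) : ℂ) := by
    intro t ht
    rw [Finset.sum_eq_single t]
    · simp only [zero_add, sub_self, one_mul]
      rw [he.int_zero ν, Complex.mul_conj, Complex.normSq_eq_norm_sq]
      push_cast; ring
    · intro q _ hq
      rw [he.int_ne ν, mul_zero]
      rw [zero_add, sub_ne_zero]; exact hq.symm
    · intro h; exact absurd ht h
  rw [Finset.sum_singleton, Finset.sum_congr rfl h3] at h1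
  rw [Finset.mul_sum]
  exact_mod_cast h1

lemma sep_lemma (ν : Measure G) [IsFiniteMeasure ν] [ν.IsAddLeftInvariant]
    (p a : K → ℂ) (B : Finset K) (c : ℝ) (S : Finset K)
    (h : ∀ T ⊆ S, BConn B T → c * ∑ k ∈ T, ‖a k‖ ^ 2 ≤
      (∫ x, tp e p B x * tp e a T x * conj (tp e a T x) ∂ν).re) :
    c * ∑ k ∈ S, ‖a k‖ ^ 2 ≤
      (∫ x, tp e p B x * tp e a S x * conj (tp e a S x) ∂ν).re := by
  induction S using Finset.strongInduction with
  | H S ih =>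
    rcases S.eq_empty_or_nonempty with rfl | ⟨q, hq⟩
    · simp [tp]
    · obtain ⟨T, hTS, hT, hsep⟩ := exists_component B S q hq
      have hlt : S \ T ⊂ S := Finset.sdiff_ssubset hTS hT.nonempty
      have h1 := ih (S \ T) hlt fun T' hT' hc => h T' (hT'.trans hlt.1) hc
      have h2 := h T hTS hT
      have hs : ∀ x, tp e a S x = tp e a (S \ T) x + tp e a T x := fun x =>
        (Finset.sum_sdiff hTS).symm
      have hc : ∀ T₁ T₂, Integrable
          (fun x => tp e p B x * tp e a T₁ x * conj (tp e a T₂ x)) ν := by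
        intro T₁ T₂
        apply cont_int he
        have := tp_cont e p B
        have := tp_cont e a T₁
        have := tp_cont e a T₂
        fun_prop
      have h3 : ∫ x, tp e p B x * tp e a S x * conj (tp e a S x) ∂ν =
          ∫ x, tp e p B x * tp e a (S \ T) x * conj (tp e a (S \ T) x) ∂ν +
          ∫ x, tp e p B x * tp e a T x * conj (tp e a T x) ∂ν := by
        have : ∀ x, tp e p B x * tp e a S x * conj (tp e a S x) =
          (tp e p B x * tp e a (S \ T) x * conj (tp e a (S \ T) x) +
           tp e p B x * tp e a T x * conj (tp e a T x)) +
          (tp e p B x * tp e a (S \ T) x * conj (tp e a T x) +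
           tp e p B x * tp e a T x * conj (tp e a (S \ T) x)) := by
          intro x; rw [hs, map_add]; ring
        simp_rw [this]
        rw [integral_add (by exact (hc _ _).add (hc _ _)) (by exact (hc _ _).add (hc _ _)),
          integral_add (hc _ _) (hc _ _), integral_add (hc _ _) (hc _ _),
          cross_zero he ν p a a B (S \ T) T (fun t ht q hq => (hsep q hq t ht).2),
          cross_zero he ν p a a B T (S \ T) (fun t ht q hq => (hsep t ht q hq).1)]
        simp
      rw [h3, Complex.add_re, ← Finset.sum_sdiff hTS, mul_add]
      linarith

lemma tp_unique (S : Finset K) : ∀ (a : K → ℂ) (U : Set G), IsOpen U → U.Nonempty →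
    (∀ x ∈ U, tp e a S x = 0) → ∀ k ∈ S, a k = 0 := by
  induction S using Finset.induction_on with
  | empty => simp
  | insert k₀ S hk₀ ih =>
    rintro a U hU ⟨x₀, hx₀⟩ hz
    have hS : ∀ k ∈ S, a k = 0 := by
      intro k hk
      have hkk : k - k₀ ≠ 0 := by
        rw [sub_ne_zero]; rintro rfl; exact hk₀ hk
      have hN : (fun s => x₀ + s) ⁻¹' U ∈ 𝓝 (0 : G) :=
        (hU.preimage (by fun_prop)).mem_nhds (by simpa using hx₀)
      obtain ⟨s, hs, hne⟩ := he.loc _ hkk _ hN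
      have h1 := ih (fun k => a k * (e k s - e k₀ s)) (U ∩ (fun x => x + s) ⁻¹' U)
        (hU.inter (hU.preimage (by fun_prop))) ⟨x₀, hx₀, hs⟩ (by
          rintro x ⟨hx, hxs⟩
          have e1 := hz x hx
          have e2 := hz (x + s) hxs
          have : tp e (fun k => a k * (e k s - e k₀ s)) S x =
              tp e a (insert k₀ S) (x + s) - e k₀ s * tp e a (insert k₀ S) x := by
            simp only [tp, Finset.sum_insert hk₀, he.map, mul_add, Finset.mul_sum]
            rw [add_sub_add_comm, ← Finset.sum_sub_distrib]
            have : a k₀ * (e k₀ x * e k₀ s) - e k₀ s * (a k₀ * e k₀ x) = 0 := by ring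
            rw [this, zero_add]
            refine Finset.sum_congr rfl fun k _ => ?_
            ring
          rw [this, e1, e2]; simp) k hk
      refine (mul_eq_zero.1 h1).resolve_right ?_
      intro h2
      apply hne
      have h3 : e k s = e (k - k₀) s * e k₀ s := by rw [← he.add]; simp
      rw [h3] at h2
      have h4 : (e (k - k₀) s - 1) * e k₀ s = 0 := by linear_combination h2
      exact sub_eq_zero.1 ((mul_eq_zero.1 h4).resolve_right (he.ne_zero _ _))
    intro k hk
    rcases Finset.mem_insert.1 hk with rfl | hk
    · have h1 := hz x₀ hx₀
      rw [tp, Finset.sum_insert hk₀, Finset.sum_eq_zero, add_zero] at h1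
      · exact (mul_eq_zero.1 h1).resolve_right (he.ne_zero _ _)
      · intro k hk; rw [hS k hk, zero_mul]
    · exact hS k hk

lemma fixed_lower (ν : Measure G) [IsFiniteMeasure ν] [ν.IsOpenPosMeasure]
    (g : C(G, ℝ)) (hg : ∀ x, 0 ≤ g x) (x₀ : G) (hx₀ : 0 < g x₀) (A : Finset K) :
    ∃ c > 0, ∀ a : K → ℂ, c * ∑ k ∈ A, ‖a k‖ ^ 2 ≤ ∫ x, g x * ‖tp e a A x‖ ^ 2 ∂ν := by
  -- extension by zero
  let ext : (A → ℂ) → K → ℂ := fun b k => if h : k ∈ A then b ⟨k, h⟩ else 0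
  have hext : ∀ b x, tp e (ext b) A x = ∑ k : A, b k * e k x := by
    intro b x
    rw [tp, ← Finset.sum_coe_sort]
    refine Finset.sum_congr rfl fun k _ => ?_
    simp [ext]
  let J : (A → ℂ) → ℝ := fun b => ∫ x, g x * ‖∑ k : A, b k * e k x‖ ^ 2 ∂ν
  have hJc : Continuous J := by
    have : ∀ b, J b = (∑ k : A, ∑ l : A, b k * conj (b l) *
        ∫ x, (g x : ℂ) * (e k x * conj (e l x)) ∂ν).re := by
      intro b
      have h1 : ∀ k l : A, Integrable (fun x => b k * conj (b l) *
          ((g x : ℂ) * (e k x * conj (e l x)))) ν := by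
        intro k l; apply cont_int he; fun_prop
      simp_rw [← integral_const_mul]
      simp_rw [← integral_finsetSum Finset.univ (fun l _ => h1 _ l)]
      rw [← integral_finsetSum Finset.univ (fun k _ =>
        integrable_finsetSum Finset.univ fun l _ => h1 k l)]
      rw [← RCLike.re_eq_complex_re, ← integral_re (integrable_finsetSum _ (fun k _ =>
        integrable_finsetSum _ fun l _ => h1 k l))]
      refine integral_congr_ae (ae_of_all _ fun x => ?_)
      have h2 : ∑ k : A, ∑ l : A, b k * conj (b l) * ((g x : ℂ) * (e k x * conj (e l x))) =
          ((g x * ‖∑ k : A, b k * e k x‖ ^ 2 : ℝ) : ℂ) := by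
        rw [← Complex.normSq_eq_norm_sq, Complex.ofReal_mul, ← Complex.mul_conj, map_sum,
          Finset.sum_mul_sum, Finset.mul_sum]
        refine Finset.sum_congr rfl fun k _ => ?_
        rw [Finset.mul_sum]
        refine Finset.sum_congr rfl fun l _ => ?_
        rw [map_mul]; ring
      simp only [h2, RCLike.re_eq_complex_re, Complex.ofReal_re]
    rw [funext this]
    fun_prop
  have hpos : ∀ b, b ≠ 0 → 0 < J b := by
    intro b hb
    have hcont : Continuous fun x => g x * ‖∑ k : A, b k * e k x‖ ^ 2 := by fun_prop
    have h0 : ∀ x, 0 ≤ g x * ‖∑ k : A, b k * e k x‖ ^ 2 := fun x =>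
      mul_nonneg (hg x) (by positivity)
    refine lt_of_le_of_ne (integral_nonneg h0) fun h => hb ?_
    have h1 := (integral_eq_zero_iff_of_nonneg h0 (cont_int_real he ν hcont)).1 h.symm
    have h2 := (Continuous.ae_eq_iff_eq ν hcont continuous_const).1 h1
    have h3 := tp_unique he A (ext b) {x | 0 < g x}
      (isOpen_lt continuous_const g.continuous) ⟨x₀, hx₀⟩ (by
        intro x hx
        have h4 : g x * ‖∑ k : A, b k * e k x‖ ^ 2 = 0 := congrFun h2 x
        rw [mul_eq_zero] at h4
        rw [hext]
        have hx' : 0 < g x := hx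
        simpa using h4.resolve_left hx'.ne')
    funext k
    have := h3 k k.2
    simpa [ext] using this
  -- minimum over the set where the sum of squares is one
  let N : (A → ℂ) → ℝ := fun b => ∑ k : A, ‖b k‖ ^ 2
  have hNc : Continuous N := by fun_prop
  have hcomp : IsCompact {b | N b = 1} := by
    refine Metric.isCompact_of_isClosed_isBounded (isClosed_eq hNc continuous_const) ?_
    refine (Metric.isBounded_closedBall (x := (0 : A → ℂ)) (r := 1)).subset ?_
    intro b hb
    rw [mem_closedBall_zero_iff, pi_norm_le_iff_of_nonneg zero_le_one]
    intro k
    have h1 : ‖b k‖ ^ 2 ≤ N b :=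
      Finset.single_le_sum (f := fun k => ‖b k‖ ^ 2) (fun _ _ => by positivity) (Finset.mem_univ k)
    rw [show N b = 1 from hb] at h1
    exact (sq_le_one_iff₀ (norm_nonneg _)).1 h1
  have hmin : ∃ c > 0, ∀ b, N b = 1 → c ≤ J b := by
    rcases Set.eq_empty_or_nonempty {b | N b = 1} with h | h
    · refine ⟨1, one_pos, fun b hb => ?_⟩
      have : b ∈ {b | N b = 1} := hb
      rw [h] at this
      exact this.elim
    · obtain ⟨b₀, hb₀, hm⟩ := hcomp.exists_isMinOn h hJc.continuousOn
      refine ⟨J b₀, hpos b₀ ?_, fun b hb => hm hb⟩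
      rintro rfl
      have : N 0 = 1 := hb₀
      simp [N] at this
  obtain ⟨c, hc, hcJ⟩ := hmin
  refine ⟨c, hc, fun a => ?_⟩
  let b : A → ℂ := fun k => a k
  have hN : ∑ k ∈ A, ‖a k‖ ^ 2 = N b := by
    rw [← Finset.sum_coe_sort]
  have hJ : ∫ x, g x * ‖tp e a A x‖ ^ 2 ∂ν = J b := by
    simp only [J, b, tp]
    congr 1; ext x
    rw [← Finset.sum_coe_sort]
  rw [hN, hJ]
  have hN0 : 0 ≤ N b := Finset.sum_nonneg fun _ _ => by positivity
  rcases hN0.eq_or_lt with h | h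
  · rw [← h, mul_zero]
    exact integral_nonneg fun x => mul_nonneg (hg x) (by positivity)
  · set r := Real.sqrt (N b) with hr
    have hr0 : 0 < r := Real.sqrt_pos.2 h
    have hr2 : r ^ 2 = N b := Real.sq_sqrt h.le
    let b' : A → ℂ := fun k => (r⁻¹ : ℝ) * b k
    have h1 : N b' = 1 := by
      simp only [N, b', norm_mul, Complex.norm_real, mul_pow, ← Finset.mul_sum]
      change ‖r⁻¹‖ ^ 2 * N b = 1
      rw [← hr2, Real.norm_eq_abs, sq_abs]; field_simp
    have h2 : J b' = (N b)⁻¹ * J b := by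
      simp only [J, ← integral_const_mul]
      congr 1; ext x
      have : ∑ k : A, b' k * e k x = ((r⁻¹ : ℝ) : ℂ) * ∑ k : A, b k * e k x := by
        rw [Finset.mul_sum]; refine Finset.sum_congr rfl fun k _ => ?_
        simp only [b']; ring
      rw [this, norm_mul, mul_pow, Complex.norm_real, Real.norm_eq_abs, sq_abs, ← hr2]
      field_simp
    have h3 := hcJ b' h1
    rw [h2] at h3
    calc c * N b ≤ ((N b)⁻¹ * J b) * N b := by gcongr
      _ = J b := by field_simp

lemma bdd_lower (ν : Measure G) [IsFiniteMeasure ν] [ν.IsOpenPosMeasure]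
    (g : C(G, ℝ)) (hg : ∀ x, 0 ≤ g x) (x₀ : G) (hx₀ : 0 < g x₀) (F : Finset K) :
    ∃ c > 0, ∀ (S : Finset K) (p₀ : K), (∀ p ∈ S, p - p₀ ∈ F) → ∀ a : K → ℂ,
      c * ∑ k ∈ S, ‖a k‖ ^ 2 ≤ ∫ x, g x * ‖tp e a S x‖ ^ 2 ∂ν := by
  obtain ⟨c, hc, h⟩ := fixed_lower he ν g hg x₀ hx₀ F
  refine ⟨c, hc, fun S p₀ hS a => ?_⟩
  let a' : K → ℂ := fun k => if k + p₀ ∈ S then a (k + p₀) else 0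
  have gen : ∀ {M : Type} [AddCommMonoid M] (f : K → M),
      ∑ k ∈ S, f k = ∑ k ∈ F, if k + p₀ ∈ S then f (k + p₀) else 0 := by
    intro M _ f
    rw [← Finset.sum_filter]
    symm
    refine Finset.sum_bij (fun k _ => k + p₀) ?_ ?_ ?_ ?_
    · intro k hk; exact (Finset.mem_filter.1 hk).2
    · intro k _ l _ hkl; exact add_right_cancel hkl
    · intro p hp
      exact ⟨p - p₀, by simp [hp, hS p hp], by simp⟩
    · intros; rfl
  have h1 := h a'
  have h2 : ∑ k ∈ F, ‖a' k‖ ^ 2 = ∑ k ∈ S, ‖a k‖ ^ 2 := by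
    rw [gen]
    refine Finset.sum_congr rfl fun k _ => ?_
    simp only [a']; split_ifs <;> simp
  have h3 : ∀ x, ‖tp e a S x‖ = ‖tp e a' F x‖ := by
    intro x
    have : tp e a S x = e p₀ x * tp e a' F x := by
      rw [tp, gen, tp, Finset.mul_sum]
      refine Finset.sum_congr rfl fun k _ => ?_
      simp only [a']; split_ifs
      · rw [he.add]; ring
      · simp
    rw [this, norm_mul, he.norm, one_mul]
  simp_rw [h3]
  rwa [h2] at h1

variable {V : Type*} [NormedAddCommGroup V] [InnerProductSpace ℝ V] [FiniteDimensional ℝ V]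

lemma main_lower (ν : Measure G) [IsFiniteMeasure ν] [ν.IsOpenPosMeasure] [ν.IsAddLeftInvariant]
    (g : C(G, ℝ)) (hg : ∀ x, 0 ≤ g x) (x₀ : G) (hx₀ : 0 < g x₀)
    (φ : K →+ V) (hfin : ∀ L : ℝ, {k | ‖φ k‖ ≤ L}.Finite) (j : ℕ) :
    ∃ c > 0, ∀ (z : V) (μ : ℝ) (S : Finset K), InAnn φ z μ S → adim φ S ≤ j → ∀ a : K → ℂ,
      c * ∑ k ∈ S, ‖a k‖ ^ 2 ≤ ∫ x, g x * ‖tp e a S x‖ ^ 2 ∂ν := by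
  induction j with
  | zero =>
    obtain ⟨c, hc, h⟩ := bdd_lower he ν g hg x₀ hx₀ (hfin 0).toFinset
    refine ⟨c, hc, fun z μ S _ hd a => ?_⟩
    rcases S.eq_empty_or_nonempty with rfl | ⟨q, hq⟩
    · simp [tp]
    refine h S q (fun p hp => ?_) a
    have h0 : vectorSpan ℝ (φ '' (S : Set K)) = ⊥ :=
      Submodule.finrank_eq_zero.1 (Nat.le_zero.1 hd)
    have h1 : φ p -ᵥ φ q ∈ vectorSpan ℝ (φ '' (S : Set K)) :=
      vsub_mem_vectorSpan ℝ ⟨p, hp, rfl⟩ ⟨q, hq, rfl⟩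
    rw [h0, Submodule.mem_bot] at h1
    simp only [Set.Finite.mem_toFinset, Set.mem_ofPred_eq, map_sub]
    simp only [vsub_eq_sub] at h1
    rw [h1, norm_zero]
  | succ j ih =>
    obtain ⟨c, hc, h⟩ := ih
    set vol := ν.real Set.univ with hvol
    have hvol0 : 0 ≤ vol := measureReal_nonneg
    set δ := c / (4 * (vol + 1)) with hδ
    have hδ0 : 0 < δ := by positivity
    have hδv : δ * vol ≤ c / 4 := by
      rw [hδ, div_mul_eq_mul_div, div_le_div_iff₀ (by positivity) (by positivity)]
      nlinarith
    obtain ⟨B, p, hp⟩ := he.dense ⟨fun x => (g x : ℂ), by fun_prop⟩ δ hδ0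
    have comp : ∀ a T, |(∫ x, tp e p B x * tp e a T x * conj (tp e a T x) ∂ν).re -
        ∫ x, g x * ‖tp e a T x‖ ^ 2 ∂ν| ≤ c / 4 * ∑ k ∈ T, ‖a k‖ ^ 2 := by
      intro a T
      have cB := tp_cont e p B
      have cT := tp_cont e a T
      rw [← RCLike.re_eq_complex_re, ← integral_re (cont_int he ν (by fun_prop)),
        ← integral_sub (cont_int_real he ν (by simp only [RCLike.re_eq_complex_re]; fun_prop))
          (cont_int_real he ν (by fun_prop))]
      calc _ ≤ ∫ x, δ * ‖tp e a T x‖ ^ 2 ∂ν := by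
            rw [← Real.norm_eq_abs]
            refine norm_integral_le_of_norm_le (cont_int_real he ν (by fun_prop))
              (ae_of_all _ fun x => ?_)
            have e1 : RCLike.re (tp e p B x * tp e a T x * conj (tp e a T x)) =
                (tp e p B x).re * ‖tp e a T x‖ ^ 2 := by
              rw [mul_assoc, Complex.mul_conj, Complex.normSq_eq_norm_sq,
                RCLike.re_eq_complex_re, Complex.re_mul_ofReal]
            rw [e1, ← sub_mul, norm_mul, Real.norm_of_nonneg (sq_nonneg ‖tp e a T x‖)]
            gcongr
            have e2 := hp x
            have e3 := Complex.abs_re_le_norm ((g x : ℂ) - tp e p B x)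
            rw [Complex.sub_re, Complex.ofReal_re] at e3
            rw [Real.norm_eq_abs, abs_sub_comm]
            exact e3.trans e2
        _ = δ * (vol * ∑ k ∈ T, ‖a k‖ ^ 2) := by
            rw [integral_const_mul, int_normSq he]
        _ ≤ _ := by
            rw [← mul_assoc]
            gcongr
    obtain ⟨F, hF⟩ := dichotomy φ hfin B j
    obtain ⟨c', hc', h'⟩ := bdd_lower he ν g hg x₀ hx₀ F
    refine ⟨min (c / 2) c', by positivity, fun z μ S hS hd a => ?_⟩
    have hsum : 0 ≤ ∑ k ∈ S, ‖a k‖ ^ 2 := Finset.sum_nonneg fun _ _ => by positivity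
    rcases hF z μ S hS hd with hcase | ⟨p₀, hp₀⟩
    · have h1 := sep_lemma he ν p a B (c - c / 4) S (by
        intro T hT hconn
        have e1 := h z μ T (fun k hk => hS k (hT hk)) (hcase T hT hconn) a
        have e2 := (abs_le.1 (comp a T)).1
        linarith)
      have e2 := (abs_le.1 (comp a S)).2
      calc _ ≤ c / 2 * ∑ k ∈ S, ‖a k‖ ^ 2 := by gcongr; exact min_le_left _ _
        _ ≤ _ := by linarith
    · calc _ ≤ c' * ∑ k ∈ S, ‖a k‖ ^ 2 := by gcongr; exact min_le_right _ _
        _ ≤ _ := h' S p₀ hp₀ a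

end Harm
section Parseval

set_option linter.unusedSectionVars false

open scoped ComplexConjugate Topology

variable {K : Type*} [AddCommGroup K] [DecidableEq K]
  {G : Type*} [AddCommGroup G] [TopologicalSpace G] [IsTopologicalAddGroup G] [CompactSpace G]
  [MeasurableSpace G] [BorelSpace G] [NormalSpace G]
  {e : K → C(G, ℂ)} (he : CharSys e)
include he

lemma vol_pos (ν : Measure G) [IsFiniteMeasure ν] [ν.IsOpenPosMeasure] :
    0 < ν.real Set.univ := by
  rw [measureReal_def]
  exact ENNReal.toReal_pos (IsOpen.measure_ne_zero ν isOpen_univ ⟨0, trivial⟩)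
    (measure_ne_top _ _)

lemma span_dense : (Submodule.span ℂ (Set.range e)).topologicalClosure = ⊤ := by
  rw [eq_top_iff]
  intro f _
  change f ∈ closure _
  rw [Metric.mem_closure_iff]
  intro ε hε
  obtain ⟨B, p, h⟩ := he.dense f (ε / 2) (by positivity)
  refine ⟨∑ b ∈ B, p b • e b, Submodule.sum_mem _ fun b _ =>
    Submodule.smul_mem _ _ (Submodule.subset_span ⟨b, rfl⟩), ?_⟩
  refine lt_of_le_of_lt ?_ (half_lt_self hε)
  rw [ContinuousMap.dist_le (by positivity)]
  intro x
  rw [dist_eq_norm]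
  simpa using h x

lemma parseval (ν : Measure G) [IsFiniteMeasure ν] [ν.IsOpenPosMeasure] [ν.IsAddLeftInvariant]
    [ν.WeaklyRegular] (w : G → ℂ) (hw : MemLp w 2 ν) :
    HasSum (fun k => ‖∫ x, w x * conj (e k x) ∂ν‖ ^ 2)
      (ν.real Set.univ * ∫ x, ‖w x‖ ^ 2 ∂ν) := by
  set vol := ν.real Set.univ with hvol
  have hv : 0 < vol := vol_pos he ν
  have hsq : Real.sqrt vol ≠ 0 := (Real.sqrt_pos.2 hv).ne'
  let el : K → Lp ℂ 2 ν := fun k => ContinuousMap.toLp 2 ν ℂ (e k)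
  let r : ℂ := ((Real.sqrt vol)⁻¹ : ℝ)
  have hr : r ≠ 0 := by simp [r, hsq]
  let b : K → Lp ℂ 2 ν := fun k => r • el k
  have hinner : ∀ k l, inner ℂ (el k) (el l) = if k = l then (vol : ℂ) else 0 := by
    intro k l
    simp only [el]
    rw [ContinuousMap.inner_toLp]
    have : ∀ x, e l x * conj (e k x) = e (l - k) x := by
      intro x; rw [he.conj_eq, ← he.add, sub_eq_add_neg]
    simp_rw [this]
    split_ifs with h
    · rw [h, sub_self, he.int_zero ν]
    · exact he.int_ne ν (sub_ne_zero.2 (Ne.symm h))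
  have hrr : conj r * (r * (vol : ℂ)) = 1 := by
    simp only [r, Complex.conj_ofReal]
    norm_cast
    rw [← mul_assoc, ← mul_inv, Real.mul_self_sqrt hv.le, inv_mul_cancel₀ hv.ne']
  have horth : Orthonormal ℂ b := by
    rw [orthonormal_iff_ite]
    intro k l
    simp only [b, inner_smul_left, inner_smul_right, hinner]
    split_ifs with h
    · linear_combination hrr
    · simp
  have hdense : ⊤ ≤ (Submodule.span ℂ (Set.range b)).topologicalClosure := by
    have h1 := (ContinuousMap.toLp_denseRange ℂ ν (p := 2) ℂ
      (by simp)).topologicalClosure_map_submodule (span_dense he)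
    rw [← h1]
    refine Submodule.topologicalClosure_mono ?_
    rw [Submodule.map_span, Submodule.span_le]
    rintro _ ⟨_, ⟨k, rfl⟩, rfl⟩
    have : el k = r⁻¹ • b k := by simp only [b]; rw [inv_smul_smul₀ hr]
    change el k ∈ _
    rw [this]
    exact Submodule.smul_mem _ _ (Submodule.subset_span ⟨k, rfl⟩)
  let hb := HilbertBasis.mk horth hdense
  let W := hw.toLp w
  have hW : ∀ k, inner ℂ (b k) W = r * ∫ x, w x * conj (e k x) ∂ν := by
    intro k
    simp only [b, inner_smul_left]
    congr 1
    · simp [r]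
    · rw [L2.inner_def]
      refine integral_congr_ae ?_
      filter_upwards [hw.coeFn_toLp, ContinuousMap.coeFn_toLp ν (𝕜 := ℂ) (p := 2) (e k)] with x h1 h2
      simp only [W, el]
      rw [h1, h2, RCLike.inner_apply]
  have hWW : inner ℂ W W = ((∫ x, ‖w x‖ ^ 2 ∂ν : ℝ) : ℂ) := by
    rw [L2.inner_def, ← integral_complex_ofReal]
    refine integral_congr_ae ?_
    filter_upwards [hw.coeFn_toLp] with x h1
    simp only [W]
    rw [h1, RCLike.inner_apply, Complex.mul_conj, Complex.normSq_eq_norm_sq]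
  have hs := hb.hasSum_inner_mul_inner W W
  rw [hWW] at hs
  have hs2 : ∀ k, inner ℂ W (hb k) * inner ℂ (hb k) W =
      ((vol⁻¹ * ‖∫ x, w x * conj (e k x) ∂ν‖ ^ 2 : ℝ) : ℂ) := by
    intro k
    have : hb k = b k := by simp [hb]
    rw [this, ← inner_conj_symm W (b k), mul_comm, Complex.mul_conj, Complex.normSq_eq_norm_sq, hW,
      norm_mul, mul_pow]
    congr 2
    simp only [r, Complex.norm_real, Real.norm_eq_abs, sq_abs, inv_pow]
    rw [Real.sq_sqrt hv.le]
  simp_rw [hs2] at hs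
  have hs3 := (Complex.hasSum_ofReal.1 hs).mul_left vol
  simpa [← mul_assoc, hv.ne'] using hs3

lemma eLp_conv (ν : Measure G) {w : G → ℂ} (hw : MemLp w 2 ν) :
    eLpNorm w 2 ν = ENNReal.ofReal (Real.sqrt (∫ x, ‖w x‖ ^ 2 ∂ν)) := by
  rw [hw.eLpNorm_eq_integral_rpow_norm (by simp) (by simp)]
  congr 1
  rw [Real.sqrt_eq_rpow]
  norm_num

lemma abstract_est (ν : Measure G) [IsFiniteMeasure ν] [ν.IsOpenPosMeasure]
    [ν.IsAddLeftInvariant] [ν.WeaklyRegular] (g : C(G, ℝ)) (hg : ∀ x, 0 ≤ g x)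
    (hg1 : ∀ x, g x ≤ 1) (Ω : Set G) (hΩ : MeasurableSet Ω) (hgΩ : ∀ x ∉ Ω, g x = 0)
    (c : ℝ) (hc : 0 < c) (N : Finset K)
    (hN : ∀ a : K → ℂ, c * ∑ k ∈ N, ‖a k‖ ^ 2 ≤ ∫ x, g x * ‖tp e a N x‖ ^ 2 ∂ν)
    (u f : G → ℂ) (hu : MemLp u 2 ν) (hf : MemLp f 2 ν)
    (huf : ∀ k ∉ N, ‖∫ x, u x * conj (e k x) ∂ν‖ ≤ ‖∫ x, f x * conj (e k x) ∂ν‖) :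
    eLpNorm u 2 ν ≤ ENNReal.ofReal (Real.sqrt (ν.real Set.univ / c) + 1) *
      (eLpNorm f 2 ν + eLpNorm u 2 (ν.restrict Ω)) := by
  set vol := ν.real Set.univ with hvol
  have hv : 0 < vol := vol_pos he ν
  let a : K → ℂ := fun k => (vol : ℂ)⁻¹ * ∫ x, u x * conj (e k x) ∂ν
  let v := tp e a N
  have cv : Continuous v := tp_cont e a N
  have hvm : MemLp v 2 ν := cv.memLp_of_hasCompactSupport (HasCompactSupport.of_compactSpace _)
  let w := u - v
  have hw : MemLp w 2 ν := hu.sub hvm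
  have hem : ∀ k, MemLp (fun x => conj (e k x)) 2 ν := fun k =>
    Continuous.memLp_of_hasCompactSupport (by fun_prop) (HasCompactSupport.of_compactSpace _)
  have hvc : ∀ k, ∫ x, v x * conj (e k x) ∂ν =
      if k ∈ N then ∫ x, u x * conj (e k x) ∂ν else 0 := by
    intro k
    have h1 : ∀ x, v x * conj (e k x) = ∑ l ∈ N, a l * e (l - k) x := by
      intro x
      simp only [v, tp, Finset.sum_mul]
      refine Finset.sum_congr rfl fun l _ => ?_
      rw [he.conj_eq, sub_eq_add_neg, he.add]; ring
    simp_rw [h1]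
    rw [integral_finsetSum _ fun l _ => cont_int he ν (by fun_prop)]
    simp_rw [integral_const_mul]
    have h2 : ∀ l, ∫ x, e (l - k) x ∂ν = if l = k then (vol : ℂ) else 0 := by
      intro l
      split_ifs with h
      · rw [h, sub_self, he.int_zero ν]
      · exact he.int_ne ν (sub_ne_zero.2 h)
    simp_rw [h2, mul_ite, mul_zero]
    rw [Finset.sum_ite_eq']
    split_ifs
    · have : (vol : ℂ) ≠ 0 := by exact_mod_cast hv.ne'
      simp only [a]; field_simp
    · rfl
  have hwf : ∀ k, ‖∫ x, w x * conj (e k x) ∂ν‖ ^ 2 ≤ ‖∫ x, f x * conj (e k x) ∂ν‖ ^ 2 := by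
    intro k
    have h1 : ∫ x, w x * conj (e k x) ∂ν =
        ∫ x, u x * conj (e k x) ∂ν - ∫ x, v x * conj (e k x) ∂ν := by
      have i1 : Integrable (fun x => u x * conj (e k x)) ν := hu.integrable_mul (hem k)
      have i2 : Integrable (fun x => v x * conj (e k x)) ν := hvm.integrable_mul (hem k)
      rw [← integral_sub i1 i2]
      simp only [w, Pi.sub_apply, sub_mul]
    rw [h1, hvc]
    by_cases hk : k ∈ N
    · simp [hk]
    · simp only [hk, if_false, sub_zero]
      gcongr
      exact huf k hk
  have hwle : eLpNorm w 2 ν ≤ eLpNorm f 2 ν := by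
    rw [eLp_conv he ν hw, eLp_conv he ν hf]
    refine ENNReal.ofReal_le_ofReal (Real.sqrt_le_sqrt ?_)
    have := hasSum_le hwf (parseval he ν w hw) (parseval he ν f hf)
    exact le_of_mul_le_mul_left this hv
  have hvle : eLpNorm v 2 ν ≤
      ENNReal.ofReal (Real.sqrt (vol / c)) * eLpNorm v 2 (ν.restrict Ω) := by
    rw [eLp_conv he ν hvm, eLp_conv he _ (hvm.mono_measure Measure.restrict_le_self),
      ← ENNReal.ofReal_mul (by positivity), ← Real.sqrt_mul (by positivity)]
    gcongr
    have h1 : ∫ x, ‖v x‖ ^ 2 ∂ν = vol * ∑ k ∈ N, ‖a k‖ ^ 2 := int_normSq he ν a N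
    have h2 := hN a
    have h3 : ∫ x, g x * ‖v x‖ ^ 2 ∂ν ≤ ∫ x in Ω, ‖v x‖ ^ 2 ∂ν := by
      rw [← integral_indicator hΩ]
      refine integral_mono (cont_int_real he ν (by fun_prop))
        ((cont_int_real he ν (by fun_prop)).indicator hΩ) fun x => ?_
      by_cases hx : x ∈ Ω
      · simp only [Set.indicator_of_mem hx]
        exact mul_le_of_le_one_left (by positivity) (hg1 x)
      · simp [Set.indicator_of_notMem hx, hgΩ x hx]
    rw [h1, div_mul_eq_mul_div, le_div_iff₀ hc, mul_assoc]
    gcongr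
    rw [mul_comm]
    exact h2.trans h3
  set D := ENNReal.ofReal (Real.sqrt (vol / c)) with hD
  have hD1 : ENNReal.ofReal (Real.sqrt (vol / c) + 1) = D + 1 := by
    rw [ENNReal.ofReal_add (by positivity) (by positivity), ENNReal.ofReal_one]
  have huv : eLpNorm u 2 ν ≤ eLpNorm v 2 ν + eLpNorm w 2 ν := by
    have : u = v + w := by simp [w]
    conv_lhs => rw [this]
    exact eLpNorm_add_le hvm.1 hw.1 (by norm_num)
  have hvu : eLpNorm v 2 (ν.restrict Ω) ≤ eLpNorm u 2 (ν.restrict Ω) + eLpNorm f 2 ν := by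
    have : v = u - w := by simp [w]
    rw [this]
    refine (eLpNorm_sub_le hu.1.restrict hw.1.restrict (by norm_num)).trans ?_
    gcongr
    exact (eLpNorm_mono_measure _ Measure.restrict_le_self).trans hwle
  rw [hD1]
  calc eLpNorm u 2 ν ≤ D * (eLpNorm u 2 (ν.restrict Ω) + eLpNorm f 2 ν) + eLpNorm f 2 ν := by
        refine huv.trans ?_
        gcongr
        exact hvle.trans (by gcongr)
    _ ≤ D * (eLpNorm u 2 (ν.restrict Ω) + eLpNorm f 2 ν) +
        (eLpNorm u 2 (ν.restrict Ω) + eLpNorm f 2 ν) := by gcongr; exact le_add_self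
    _ = _ := by ring

end Parseval
section Concrete

open scoped ComplexConjugate Topology

/-- concrete characters -/
noncomputable def torE (n m : ℕ) (k : (Fin n → ℤ) × (Fin m → ℤ)) : C(Torus n × Torus m, ℂ) where
  toFun z := (∏ i, fourier (k.1 i) (z.1 i)) * ∏ j, fourier (k.2 j) (z.2 j)
  continuous_toFun := by fun_prop

lemma torE_apply (n m : ℕ) (k : (Fin n → ℤ) × (Fin m → ℤ)) (z : Torus n × Torus m) :
    torE n m k z = (∏ i, fourier (k.1 i) (z.1 i)) * ∏ j, fourier (k.2 j) (z.2 j) := rfl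

lemma fourier_map_add (k : ℤ) (x y : AddCircle (2 * Real.pi)) :
    fourier k (x + y) = fourier k x * fourier k y := by
  simp [fourier_apply, smul_add, AddCircle.toCircle_add]

lemma fourier_loc (k : ℤ) (hk : k ≠ 0) (U : Set (AddCircle (2 * Real.pi))) (hU : U ∈ 𝓝 0) :
    ∃ s ∈ U, fourier k s ≠ 1 := by
  have hc : Continuous (fun t : ℝ => (t : AddCircle (2 * Real.pi))) :=
    AddCircle.continuous_mk' _
  have h1 : (fun t : ℝ => (t : AddCircle (2 * Real.pi))) ⁻¹' U ∈ 𝓝 (0 : ℝ) :=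
    hc.continuousAt.preimage_mem_nhds (by simpa using hU)
  obtain ⟨ε, hε, hb⟩ := Metric.mem_nhds_iff.1 h1
  have hk' : 0 < |(k : ℝ)| := abs_pos.2 (by exact_mod_cast hk)
  set t : ℝ := min (ε / 2) (1 / |(k : ℝ)|) with ht
  have ht0 : 0 < t := by positivity
  refine ⟨(t : AddCircle (2 * Real.pi)), hb ?_, ?_⟩
  · rw [Metric.mem_ball, dist_zero_right, Real.norm_eq_abs, abs_of_pos ht0]
    exact (min_le_left _ _).trans_lt (half_lt_self hε)
  · rw [fourier_coe_apply]
    intro h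
    rw [Complex.exp_eq_one_iff] at h
    obtain ⟨q, hq⟩ := h
    have hpi : (Real.pi : ℂ) ≠ 0 := by exact_mod_cast Real.pi_ne_zero
    have h2 : (k : ℂ) * t = q * (2 * Real.pi) := by
      have : (2 * Real.pi * I * k * t / ((2 * Real.pi : ℝ) : ℂ) : ℂ) = I * (k * t) := by
        push_cast; field_simp
      rw [this] at hq
      have h3 : I * ((k : ℂ) * t) = I * (q * (2 * Real.pi)) := by rw [hq]; ring
      exact mul_left_cancel₀ I_ne_zero h3
    have h4 : (k : ℝ) * t = q * (2 * Real.pi) := by exact_mod_cast h2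
    have h5 : |(k : ℝ)| * t = |(q : ℝ)| * (2 * Real.pi) := by
      rw [← abs_of_pos ht0, ← abs_mul, h4, abs_mul, abs_of_pos (by positivity : 0 < 2 * Real.pi)]
    have h6 : |(k : ℝ)| * t ≤ 1 := by
      calc _ ≤ |(k : ℝ)| * (1 / |(k : ℝ)|) := by gcongr; exact min_le_right _ _
        _ = 1 := by field_simp
    have h7 : 0 < |(k : ℝ)| * t := by positivity
    have hpi3 := Real.pi_gt_three
    rcases eq_or_ne q 0 with rfl | hq0
    · simp at h5; rcases h5 with h | h
      · exact hk h
      · linarith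
    · have : (1 : ℝ) ≤ |(q : ℝ)| := by exact_mod_cast Int.one_le_abs hq0
      nlinarith

lemma prod_single {d : ℕ} (k : Fin d → ℤ) (i : Fin d) (s : AddCircle (2 * Real.pi)) :
    ∏ j, (fourier (k j) ((Pi.single i s : Torus d) j) : ℂ) = fourier (k i) s := by
  rw [Finset.prod_eq_single i]
  · simp
  · intro j _ hj
    rw [Pi.single_eq_of_ne hj, fourier_eval_zero]
  · simp

lemma prod_single' {d : ℕ} (i : Fin d) (z : Torus d) :
    ∏ j, (fourier ((Pi.single i 1 : Fin d → ℤ) j) (z j) : ℂ) = fourier 1 (z i) := by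
  rw [Finset.prod_eq_single i]
  · simp
  · intro j _ hj
    rw [Pi.single_eq_of_ne hj, fourier_zero]
  · simp

lemma torE_add (n m : ℕ) (a b : (Fin n → ℤ) × (Fin m → ℤ)) (x : Torus n × Torus m) :
    torE n m (a + b) x = torE n m a x * torE n m b x := by
  simp only [torE_apply, Prod.fst_add, Prod.snd_add, Pi.add_apply, fourier_add,
    Finset.prod_mul_distrib]
  ring

lemma torE_conj (n m : ℕ) (a : (Fin n → ℤ) × (Fin m → ℤ)) (x : Torus n × Torus m) :
    conj (torE n m a x) = torE n m (-a) x := by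
  simp only [torE_apply, Prod.fst_neg, Prod.snd_neg, Pi.neg_apply, fourier_neg, map_mul, map_prod]

lemma torE_zero (n m : ℕ) (x : Torus n × Torus m) : torE n m 0 x = 1 := by
  simp [torE_apply]

/-- the star subalgebra -/
noncomputable def torAlg (n m : ℕ) : StarSubalgebra ℂ C(Torus n × Torus m, ℂ) where
  toSubalgebra := Algebra.adjoin ℂ (Set.range (torE n m))
  star_mem' := by
    change Algebra.adjoin ℂ (Set.range (torE n m)) ≤
      star (Algebra.adjoin ℂ (Set.range (torE n m)))
    refine Algebra.adjoin_le ?_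
    rintro _ ⟨k, rfl⟩
    refine Algebra.subset_adjoin ⟨-k, ?_⟩
    ext1 x
    rw [← torE_conj]
    rfl

lemma torAlg_coe (n m : ℕ) :
    (torAlg n m).toSubalgebra.toSubmodule = Submodule.span ℂ (Set.range (torE n m)) := by
  apply Algebra.adjoin_eq_span_of_subset
  refine .trans (fun x ↦ Submonoid.closure_induction (fun _ ↦ id) ⟨0, ?_⟩ ?_) Submodule.subset_span
  · ext z
    rw [torE_zero]; rfl
  · rintro _ _ _ _ ⟨a, rfl⟩ ⟨b, rfl⟩
    exact ⟨a + b, by ext z; rw [torE_add]; rfl⟩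

lemma torAlg_sep (n m : ℕ) : (torAlg n m).SeparatesPoints := by
  classical
  have hinj : ∀ x y : AddCircle (2 * Real.pi), (fourier 1 x : ℂ) = fourier 1 y → x = y := by
    intro x y h
    rw [fourier_one, fourier_one] at h
    exact AddCircle.injective_toCircle (by positivity) (Circle.ext h)
  intro x y hxy
  by_contra hcon
  have hall : ∀ k, torE n m k x = torE n m k y := by
    intro k
    by_contra h
    exact hcon ⟨_, ⟨torE n m k, Algebra.subset_adjoin ⟨k, rfl⟩, rfl⟩, h⟩
  apply hxy
  refine Prod.ext (funext fun i => hinj _ _ ?_) (funext fun i => hinj _ _ ?_)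
  · have := hall (Pi.single i 1, 0)
    simp only [torE_apply, prod_single'] at this
    simpa using this
  · have := hall (0, Pi.single i 1)
    simp only [torE_apply, prod_single'] at this
    simpa using this

lemma torSys (n m : ℕ) : CharSys (torE n m) where
  add := torE_add n m
  map k x y := by
    simp only [torE_apply, Prod.fst_add, Prod.snd_add, Pi.add_apply, fourier_map_add,
      Finset.prod_mul_distrib]
    ring
  conj_eq := torE_conj n m
  zero := torE_zero n m
  loc k hk U hU := by
    classical
    have : (∃ i, k.1 i ≠ 0) ∨ ∃ j, k.2 j ≠ 0 := by
      by_contra h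
      push Not at h
      exact hk (Prod.ext (funext h.1) (funext h.2))
    rcases this with ⟨i, hi⟩ | ⟨j, hj⟩
    · have hc : Continuous fun s : AddCircle (2 * Real.pi) =>
          ((Pi.single i s, 0) : Torus n × Torus m) :=
        (continuous_single (A := fun _ : Fin n => AddCircle (2 * Real.pi)) i).prodMk continuous_const
      obtain ⟨s, hs, hs'⟩ := fourier_loc _ hi _
        (hc.continuousAt.preimage_mem_nhds (x := 0) (t := U) (by rw [Pi.single_zero]; exact hU))
      refine ⟨_, hs, ?_⟩
      rw [torE_apply]
      dsimp only
      rw [prod_single]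
      simpa only [Pi.zero_apply, fourier_eval_zero, Finset.prod_const_one, mul_one, one_mul] using hs'
    · have hc : Continuous fun s : AddCircle (2 * Real.pi) =>
          ((0, Pi.single j s) : Torus n × Torus m) :=
        continuous_const.prodMk (continuous_single (A := fun _ : Fin m => AddCircle (2 * Real.pi)) j)
      obtain ⟨s, hs, hs'⟩ := fourier_loc _ hj _
        (hc.continuousAt.preimage_mem_nhds (x := 0) (t := U) (by rw [Pi.single_zero]; exact hU))
      refine ⟨_, hs, ?_⟩
      rw [torE_apply]
      dsimp only
      rw [prod_single]
      simpa only [Pi.zero_apply, fourier_eval_zero, Finset.prod_const_one, mul_one, one_mul] using hs'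
  dense f δ hδ := by
    have h1 : (Submodule.span ℂ (Set.range (torE n m))).topologicalClosure = ⊤ := by
      rw [← torAlg_coe]
      exact congr_arg (Subalgebra.toSubmodule <| StarSubalgebra.toSubalgebra ·)
        (ContinuousMap.starSubalgebra_topologicalClosure_eq_top_of_separatesPoints _
          (torAlg_sep n m))
    have h2 : f ∈ closure (Submodule.span ℂ (Set.range (torE n m)) : Set _) := by
      rw [← Submodule.topologicalClosure_coe, h1]; trivial
    obtain ⟨P, hP, hd⟩ := Metric.mem_closure_iff.1 h2 δ hδ
    obtain ⟨c, hc⟩ := Finsupp.mem_span_range_iff_exists_finsupp.1 hP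
    refine ⟨c.support, c, fun x => ?_⟩
    have h3 : P x = ∑ b ∈ c.support, c b * torE n m b x := by
      rw [← hc, Finsupp.sum]; simp
    rw [← h3, ← dist_eq_norm]
    exact (ContinuousMap.dist_apply_le_dist x).trans hd.le

/-- embedding of frequencies -/
noncomputable def torPhi (n m : ℕ) :
    ((Fin n → ℤ) × (Fin m → ℤ)) →+ EuclideanSpace ℝ (Fin n ⊕ Fin m) where
  toFun k := WithLp.toLp 2 (Sum.elim (fun i => (k.1 i : ℝ)) (fun j => (k.2 j : ℝ)))
  map_zero' := by ext i; rcases i with i | i <;> simp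
  map_add' a b := by ext i; rcases i with i | i <;> simp

lemma torPhi_symb (n m : ℕ) (α : Fin n → ℝ) (k : (Fin n → ℤ) × (Fin m → ℤ)) :
    ‖torPhi n m k - WithLp.toLp 2 (Sum.elim α (fun _ => 0))‖ ^ 2 = twSymb α k.1 k.2 := by
  rw [EuclideanSpace.norm_sq_eq]
  simp [torPhi, twSymb]

lemma torPhi_fin (n m : ℕ) (L : ℝ) : {k | ‖torPhi n m k‖ ≤ L}.Finite := by
  have hb : ∀ k, ‖torPhi n m k‖ ≤ L → ∀ i, |torPhi n m k i| ≤ L := fun k hk i =>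
    (PiLp.norm_apply_le (torPhi n m k) i).trans hk
  refine (((Set.finite_Icc (fun _ : Fin n => -⌈L⌉) (fun _ => ⌈L⌉)).prod
    (Set.finite_Icc (fun _ : Fin m => -⌈L⌉) (fun _ => ⌈L⌉)))).subset ?_
  intro k hk
  have key : ∀ z : ℤ, |(z : ℝ)| ≤ L → -⌈L⌉ ≤ z ∧ z ≤ ⌈L⌉ := by
    intro z hz
    have := (abs_le.1 (hz.trans (Int.le_ceil L)))
    exact ⟨by exact_mod_cast this.1, by exact_mod_cast this.2⟩
  have h1 : ∀ i, |(k.1 i : ℝ)| ≤ L := fun i => hb k hk (Sum.inl i)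
  have h2 : ∀ i, |(k.2 i : ℝ)| ≤ L := fun i => hb k hk (Sum.inr i)
  exact ⟨⟨fun i => (key _ (h1 i)).1, fun i => (key _ (h1 i)).2⟩,
    ⟨fun i => (key _ (h2 i)).1, fun i => (key _ (h2 i)).2⟩⟩

lemma L2sq_eq {X : Type*} [MeasureSpace X] (A : Set X) (f : X → ℂ) :
    L2sq A f ^ (1/2 : ℝ) = eLpNorm f 2 ((volume : Measure X).restrict A) := by
  rw [eLpNorm_eq_lintegral_rpow_enorm_toReal (by simp) (by simp), L2sq]
  simp [enorm_eq_nnnorm]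

instance torInv (n m : ℕ) : (volume : Measure (Torus n × Torus m)).IsAddLeftInvariant := by
  have h1 : ∀ d, (volume : Measure (Torus d)).IsAddLeftInvariant := fun d =>
    inferInstanceAs (Measure.pi fun _ : Fin d =>
      (volume : Measure (AddCircle (2 * Real.pi)))).IsAddLeftInvariant
  have := h1 n
  have := h1 m
  refine ⟨fun g => ?_⟩
  have h := Measure.map_prod_map (volume : Measure (Torus n)) (volume : Measure (Torus m))
    (measurable_const_add g.1) (measurable_const_add g.2)
  rw [map_add_left_eq_self, map_add_left_eq_self] at h
  exact h.symm

end Concrete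

/-- **Uniform resolvent estimate for the partially twisted Laplacian** (Proposition 2.7).
Let `n, m ≥ 1` and `Ω = Ω₀×Ω₂ ⊂ 𝕋^n×𝕋^m` with `Ω₀, Ω₂` nonempty open.  There is
`C > 0`, independent of `α` and `λ`, such that for every `α ∈ [0,1)^n`, every `λ ∈ ℝ`
and all `u, f ∈ L²(𝕋^n×𝕋^m)` with `u` in the domain `H²` of `H_α` and
`(H_α - λ)u = f` (expressed on the Fourier side as
`(f)^(k,l) = (-(|k-α|²+|l|²) - λ) (u)^(k,l)`):
`‖u‖_{L²(𝕋^n×𝕋^m)} ≤ C (‖f‖_{L²(𝕋^n×𝕋^m)} + ‖u‖_{L²(Ω)})`. -/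
theorem twisted_resolvent_estimate (n m : ℕ) (hn : 1 ≤ n) (hm : 1 ≤ m)
    (Ω₀ : Set (Torus n)) (Ω₂ : Set (Torus m))
    (h₀ : Ω₀.Nonempty) (h₀' : IsOpen Ω₀) (h₂ : Ω₂.Nonempty) (h₂' : IsOpen Ω₂) :
    ∃ C : ℝ, 0 < C ∧
      ∀ (α : Fin n → ℝ), α ∈ cube01 n →
        ∀ (lam : ℝ) (u f : Torus n × Torus m → ℂ),
          MemLp u 2 (volume : Measure (Torus n × Torus m)) →
          MemLp f 2 (volume : Measure (Torus n × Torus m)) →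
          -- `u` lies in the domain `H²(𝕋^n×𝕋^m)` of `H_α`
          (∑' p : (Fin n → ℤ) × (Fin m → ℤ),
              ENNReal.ofReal ((1 + twSymb α p.1 p.2) ^ 2) * (‖torFT u p.1 p.2‖₊ : ℝ≥0∞) ^ 2) < ⊤ →
          -- `(H_α - λ) u = f`
          (∀ (k : Fin n → ℤ) (l : Fin m → ℤ),
            torFT f k l = (-(twSymb α k l : ℂ) - (lam : ℂ)) * torFT u k l) →
          L2sq (Set.univ : Set (Torus n × Torus m)) u ^ (1/2 : ℝ) ≤
            ENNReal.ofReal C *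
              (L2sq (Set.univ : Set (Torus n × Torus m)) f ^ (1/2 : ℝ) +
                L2sq (Ω₀ ×ˢ Ω₂) u ^ (1/2 : ℝ)) := by
  classical
  obtain ⟨x₀, hx₀⟩ := h₀
  obtain ⟨y₀, hy₀⟩ := h₂
  have hΩ : IsOpen (Ω₀ ×ˢ Ω₂) := h₀'.prod h₂'
  obtain ⟨g, hg0, hg1, hgI⟩ := exists_continuous_zero_one_of_isClosed
    (s := (Ω₀ ×ˢ Ω₂)ᶜ) (t := {(x₀, y₀)}) hΩ.isClosed_compl isClosed_singleton
    (by rw [Set.disjoint_singleton_right]; simp [hx₀, hy₀])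
  have he := torSys n m
  have hgx : 0 < g (x₀, y₀) := by
    have : g (x₀, y₀) = 1 := hg1 rfl
    rw [this]; exact one_pos
  obtain ⟨c, hc, hlow⟩ := main_lower he volume g (fun x => (hgI x).1) (x₀, y₀) hgx
    (torPhi n m) (torPhi_fin n m) (Module.finrank ℝ (EuclideanSpace ℝ (Fin n ⊕ Fin m)))
  refine ⟨_, add_pos_of_nonneg_of_pos (Real.sqrt_nonneg
    ((volume : Measure (Torus n × Torus m)).real Set.univ / c)) one_pos, ?_⟩
  intro α _ lam u f hu hf _ heq
  rw [L2sq_eq, L2sq_eq, L2sq_eq, Measure.restrict_univ]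
  set z : EuclideanSpace ℝ (Fin n ⊕ Fin m) := WithLp.toLp 2 (Sum.elim α (fun _ => 0)) with hz
  have hNfin : {k | |‖torPhi n m k - z‖ ^ 2 - (-lam)| ≤ 1}.Finite := by
    refine (torPhi_fin n m (Real.sqrt (1 - lam) + ‖z‖)).subset ?_
    intro k hk
    have h1 : ‖torPhi n m k - z‖ ^ 2 ≤ 1 - lam := by
      have := (abs_le.1 (show |‖torPhi n m k - z‖ ^ 2 - (-lam)| ≤ 1 from hk)).2
      linarith
    have h2 : ‖torPhi n m k - z‖ ≤ Real.sqrt (1 - lam) := Real.le_sqrt_of_sq_le h1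
    have h3 : ‖torPhi n m k‖ ≤ ‖torPhi n m k - z‖ + ‖z‖ := by
      simpa using norm_add_le (torPhi n m k - z) z
    exact h3.trans (by gcongr)
  refine abstract_est he volume g (fun x => (hgI x).1) (fun x => (hgI x).2) (Ω₀ ×ˢ Ω₂)
    hΩ.measurableSet (fun x hx => hg0 hx) c hc hNfin.toFinset ?_ u f hu hf ?_
  · refine hlow z (-lam) _ ?_ (Submodule.finrank_le _)
    intro k hk
    exact (Set.Finite.mem_toFinset hNfin).1 hk
  · intro k hk
    have hk' : 1 < |‖torPhi n m k - z‖ ^ 2 - (-lam)| := by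
      by_contra h
      exact hk ((Set.Finite.mem_toFinset hNfin).2 (not_lt.1 h))
    rw [hz, torPhi_symb] at hk'
    have h1 := heq k.1 k.2
    change ‖torFT u k.1 k.2‖ ≤ ‖torFT f k.1 k.2‖
    rw [h1, norm_mul]
    refine le_mul_of_one_le_left (norm_nonneg _) ?_
    have : (-(twSymb α k.1 k.2 : ℂ) - (lam : ℂ)) = ((-(twSymb α k.1 k.2 - (-lam)) : ℝ) : ℂ) := by
      push_cast; ring
    rw [this, Complex.norm_real, Real.norm_eq_abs, abs_neg]
    exact hk'.le
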